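/- Assume the agents have identical utilities given by a single utility function u with u(r) = 1 for every resource r ∈ R, and let A be nonempty. For each agent a, let ℓ(a) denote the maximum number k such that there is a directed path with k arcs starting at a in G (ℓ(a) is well defined when G is acyclic). Then a complete strongly G-envy-free allocation exists if and only if G is acyclic and |R| ≥ Σ_{a∈A} ℓ(a). -/

import Mathlib

/-- Identical all-ones utilities on a nonempty agent set; with
`ℓ a` the maximum number of arcs of a directed path starting at `a`
(well defined when `G` is acyclic), a complete strongly G-envy-free allocation
exists iff `G` is acyclic and `|R| ≥ Σ_{a∈A} ℓ a`. -/
theorem stmt_12 {A R : Type*} [Fintype A] [Fintype R] [Nonempty A]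
    (E : A → A → Prop) (hirr : ∀ a, ¬ E a a)
    (u : R → ℕ) (hu : ∀ r, u r = 1)
    (ℓ : A → ℕ)
    (hℓ : (∀ a, ¬ Relation.TransGen E a a) → ∀ a : A,
      IsGreatest {k : ℕ | ∃ v : ℕ → A, v 0 = a ∧ ∀ i < k, E (v i) (v (i + 1))} (ℓ a)) :
    (∃ π : A → Finset R, (∀ x y, x ≠ y → Disjoint (π x) (π y)) ∧
      (∀ r : R, ∃ a, r ∈ π a) ∧
      (∀ x y, E x y → ∑ r ∈ π y, u r < ∑ r ∈ π x, u r)) ↔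
    ((∀ a, ¬ Relation.TransGen E a a) ∧ ∑ a : A, ℓ a ≤ Fintype.card R) := by
  classical
  have _ := hirr
  simp only [hu, Finset.sum_const, smul_eq_mul, mul_one]
  constructor
  · rintro ⟨π, hd, -, hE⟩
    have hac : ∀ a, ¬ Relation.TransGen E a a := by
      have key : ∀ a b, Relation.TransGen E a b → (π b).card < (π a).card := by
        intro a b h
        induction h with
        | single h => exact hE _ _ h
        | tail _ h ih => exact (hE _ _ h).trans ih
      intro a h
      exact lt_irrefl _ (key a a h)
    refine ⟨hac, ?_⟩
    have hle : ∀ a, ℓ a ≤ (π a).card := by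
      intro a
      obtain ⟨v, hv0, hv⟩ := (hℓ hac a).1
      have key : ∀ i, i ≤ ℓ a → (π (v i)).card + i ≤ (π (v 0)).card := by
        intro i
        induction i with
        | zero => intro _; simp
        | succ i ih =>
          intro hi
          have h1 := ih (by omega)
          have h2 := hE _ _ (hv i (by omega))
          omega
      have h := key (ℓ a) le_rfl
      rw [hv0] at h
      omega
    calc ∑ a : A, ℓ a ≤ ∑ a : A, (π a).card := Finset.sum_le_sum fun a _ => hle a
      _ = (Finset.univ.biUnion π).card :=
        (Finset.card_biUnion fun x _ y _ hxy => hd x y hxy).symm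
      _ ≤ Fintype.card R := Finset.card_le_univ _
  · rintro ⟨hac, hsum⟩
    have hlt : ∀ x y, E x y → ℓ y < ℓ x := by
      intro x y hxy
      obtain ⟨v, hv0, hv⟩ := (hℓ hac y).1
      refine (hℓ hac x).2 ⟨fun n => Nat.casesOn n x v, rfl, ?_⟩
      intro i hi
      cases i with
      | zero => simpa [hv0] using hxy
      | succ i => exact hv i (by omega)
    obtain ⟨a0, ha0⟩ := Finite.exists_max ℓ
    obtain ⟨d, hd⟩ := Nat.exists_eq_add_of_le hsum
    let f : A → ℕ := fun a => ℓ a + if a = a0 then d else 0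
    have hf : Fintype.card R = Fintype.card (Σ a, Fin (f a)) := by
      simp [f, Finset.sum_add_distrib, hd]
    let e := Fintype.equivOfCardEq hf
    let g : (a : A) → Fin (f a) ↪ R := fun a =>
      ⟨fun i => e.symm ⟨a, i⟩, fun i j h => by simpa using h⟩
    refine ⟨fun a => Finset.univ.map (g a), ?_, ?_, ?_⟩
    · intro x y hxy
      rw [Finset.disjoint_left]
      intro r hx hy
      obtain ⟨i, -, hi⟩ := Finset.mem_map.1 hx
      obtain ⟨j, -, hj⟩ := Finset.mem_map.1 hy
      have h := e.symm.injective (hi.trans hj.symm)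
      exact hxy (congrArg Sigma.fst h)
    · intro r
      refine ⟨(e r).1, Finset.mem_map.2 ⟨(e r).2, Finset.mem_univ _, ?_⟩⟩
      exact e.symm_apply_apply r
    · intro x y hxy
      have h1 := hlt x y hxy
      have h2 : y ≠ a0 := by
        rintro rfl
        have := ha0 x
        omega
      simp only [Finset.card_map, Finset.card_univ, Fintype.card_fin, f, if_neg h2]
      omega
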